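/- Let N ≥ 1, 0 < q < 1, 0 < γ < min{2, N}, and let u₀ : ℝ^N → ℝ be a non-negative continuous function vanishing at infinity with u₀ not identically zero. Set η₀ = (4π)^{−N/2} ∫_{ℝ^N} exp(−|z|²/4) (1+|z|)^{−γ/(1−q)} dz. If u : ℝ^N × [0,∞) → ℝ is a non-negative function such that x ↦ u(x,t) is continuous and vanishes at infinity for every t ≥ 0, t ↦ u(·,t) is continuous into the bounded continuous functions with the sup norm, and u satisfies u(x,t) = ∫_{ℝ^N} G_t(x−y) u₀(y) dy + ∫₀ᵗ ∫_{ℝ^N} G_{t−σ}(x−y) |y|^{−γ} u(y,σ)^q dy dσ for all t ≥ 0 and x ∈ ℝ^N, then u(x,t) ≥ [(1−q) η₀]^{1/(1−q)} t^{1/(1−q)} (|x| + √t)^{−γ/(1−q)} for all x ∈ ℝ^N and t ≥ 0; in particular u(x,t) > 0 for all x ∈ ℝ^N and t > 0. -/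

import Mathlib

open MeasureTheory Filter Real

/-- The heat kernel `G_t(x) = (4πt)^{-N/2} exp(-|x|²/(4t))` on `ℝ^N`. -/
noncomputable def heatKernel (N : ℕ) (t : ℝ) (x : EuclideanSpace ℝ (Fin N)) : ℝ :=
  (4 * π * t) ^ (-(N : ℝ) / 2) * Real.exp (-‖x‖ ^ 2 / (4 * t))

/-!
Write `p = 1/(1-q)`, `r = -γ/(1-q)`, and let `w(x,t) = t^p (|x| + √t)^r`. Duhamel's formula
reproduces `w`: by parabolic scaling and `‖x - √(t-σ) z‖ + √σ ≤ (‖x‖ + √t) (1 + ‖z‖)`, a bound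
`c w ≤ u` implies `(1-q) η₀ c^q w ≤ u`. The best constant `c = inf u / w` therefore satisfies
`(1-q) η₀ c^q ≤ c`, which is the claim as soon as `c > 0`.

That `c > 0` has to be established first, because `w` decays polynomially while the heat flow of
`u₀` is only bounded below by a Gaussian. Starting after a small time `τ`, the barrier damped by
`e^{-κ|x|²}` lies below a multiple of `u`; each application of Duhamel's formula replaces `κ` by
`√q κ` without degrading the constant, so letting `κ → 0` removes the damping, and finally `τ → 0`.
-/

/-- The heat semigroup `e^{tΔ} f`, evaluated at `x`. -/
noncomputable def heatFlow (N : ℕ) (t : ℝ) (f : EuclideanSpace ℝ (Fin N) → ℝ)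
    (x : EuclideanSpace ℝ (Fin N)) : ℝ :=
  ∫ y, heatKernel N t (x - y) * f y

section HeatKernel

variable {N : ℕ} {t τ T : ℝ}

theorem heatKernel_pos (ht : 0 < t) (x : EuclideanSpace ℝ (Fin N)) : 0 < heatKernel N t x := by
  unfold heatKernel
  positivity

theorem heatKernel_nonneg (ht : 0 ≤ t) (x : EuclideanSpace ℝ (Fin N)) :
    0 ≤ heatKernel N t x := by
  unfold heatKernel
  positivity

theorem heatKernel_le (ht : 0 ≤ t) (x : EuclideanSpace ℝ (Fin N)) :
    heatKernel N t x ≤ (4 * π * t) ^ (-(N : ℝ) / 2) := by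
  refine mul_le_of_le_one_right (by positivity) (exp_le_one_iff.2 ?_)
  rw [neg_div]
  exact neg_nonpos.2 (by positivity)

theorem measurable_heatKernel :
    Measurable fun p : ℝ × EuclideanSpace ℝ (Fin N) => heatKernel N p.1 p.2 := by
  unfold heatKernel
  fun_prop

theorem integral_heatKernel (ht : 0 < t) :
    ∫ x : EuclideanSpace ℝ (Fin N), heatKernel N t x = 1 := by
  have hgauss := GaussianFourier.integral_rexp_neg_mul_sq_norm (V := EuclideanSpace ℝ (Fin N))
    (b := 1 / (4 * t)) (by positivity)
  have hexponent (x : EuclideanSpace ℝ (Fin N)) :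
      -‖x‖ ^ 2 / (4 * t) = -(1 / (4 * t)) * ‖x‖ ^ 2 := by ring
  have hbase : π / (1 / (4 * t)) = 4 * π * t := by field_simp
  simp only [heatKernel, integral_const_mul, hexponent, hgauss, hbase,
    finrank_euclideanSpace_fin]
  rw [← rpow_add (by positivity), neg_div, neg_add_cancel, rpow_zero]

theorem integrable_heatKernel_sub (ht : 0 < t) (x : EuclideanSpace ℝ (Fin N)) :
    Integrable fun y => heatKernel N t (x - y) :=
  (integrable_of_integral_eq_one (integral_heatKernel ht)).comp_sub_left x

theorem heatKernel_sqrt_smul (ht : 0 < t) (z : EuclideanSpace ℝ (Fin N)) :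
    √t ^ N * heatKernel N t (√t • z) = heatKernel N 1 z := by
  have hexponent : -‖√t • z‖ ^ 2 / (4 * t) = -‖z‖ ^ 2 / 4 := by
    rw [norm_smul, norm_of_nonneg (sqrt_nonneg t), mul_pow, sq_sqrt ht.le]
    field_simp
  have hpow : √t ^ N * t ^ (-(N : ℝ) / 2) = 1 := by
    rw [← rpow_natCast, sqrt_eq_rpow, ← rpow_mul ht.le, ← rpow_add ht,
      show 1 / 2 * (N : ℝ) + -N / 2 = 0 by ring, rpow_zero]
  simp only [heatKernel, hexponent, mul_rpow (by positivity : 0 ≤ 4 * π) ht.le, mul_one]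
  linear_combination (4 * π) ^ (-(N : ℝ) / 2) * exp (-‖z‖ ^ 2 / 4) * hpow

theorem heatFlow_eq_integral_heatKernel_one (ht : 0 < t) (f : EuclideanSpace ℝ (Fin N) → ℝ)
    (x : EuclideanSpace ℝ (Fin N)) :
    heatFlow N t f x = ∫ z, heatKernel N 1 z * f (x - √t • z) := by
  have hscale := Measure.integral_comp_smul_of_nonneg volume
    (fun y => heatKernel N t y * f (x - y)) (√t) (hR := sqrt_nonneg t)
  rw [finrank_euclideanSpace_fin, smul_eq_mul, eq_inv_mul_iff_mul_eq₀ (by positivity),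
    ← integral_const_mul] at hscale
  simp only [← mul_assoc, heatKernel_sqrt_smul ht] at hscale
  rw [hscale, ← integral_sub_left_eq_self _ volume x]
  simp only [heatFlow, sub_sub_cancel]

theorem heatFlow_nonneg (ht : 0 ≤ t) {f : EuclideanSpace ℝ (Fin N) → ℝ} (hf : 0 ≤ᵐ[volume] f)
    (x : EuclideanSpace ℝ (Fin N)) : 0 ≤ heatFlow N t f x := by
  refine integral_nonneg_of_ae ?_
  filter_upwards [hf] with y hy using mul_nonneg (heatKernel_nonneg ht _) hy

-- Splitting `‖x - y‖² ≤ 2‖x‖² + 2‖y‖²` separates the variables.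
theorem mul_exp_mul_exp_le_heatKernel_sub (hτ : 0 < τ) (hτt : τ ≤ t) (htT : t ≤ T)
    (x y : EuclideanSpace ℝ (Fin N)) :
    (4 * π * T) ^ (-(N : ℝ) / 2) * exp (-(1 / (2 * τ) * ‖x‖ ^ 2)) *
      exp (-(1 / (2 * τ)) * ‖y‖ ^ 2) ≤ heatKernel N t (x - y) := by
  have ht : 0 < t := hτ.trans_le hτt
  have hsq : ‖x - y‖ ^ 2 ≤ 2 * (‖x‖ ^ 2 + ‖y‖ ^ 2) :=
    (pow_le_pow_left₀ (norm_nonneg _) (norm_sub_le x y) 2).trans add_sq_le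
  have hexponent : ‖x - y‖ ^ 2 / (4 * t) ≤ 1 / (2 * τ) * ‖x‖ ^ 2 + 1 / (2 * τ) * ‖y‖ ^ 2 :=
    calc ‖x - y‖ ^ 2 / (4 * t) ≤ 2 * (‖x‖ ^ 2 + ‖y‖ ^ 2) / (4 * τ) := by gcongr
      _ = 1 / (2 * τ) * ‖x‖ ^ 2 + 1 / (2 * τ) * ‖y‖ ^ 2 := by field_simp; ring
  rw [mul_assoc, ← exp_add]
  refine mul_le_mul ?_ (exp_le_exp.2 ?_) (by positivity) (by positivity)
  · refine rpow_le_rpow_of_nonpos (by positivity) (by gcongr) ?_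
    rw [neg_div]
    exact neg_nonpos.2 (by positivity)
  · rw [neg_div]
    linarith

theorem exists_gaussian_le_heatFlow {f : EuclideanSpace ℝ (Fin N) → ℝ} (hf : MemLp f ⊤)
    (hf0 : 0 ≤ᵐ[volume] f) (hne : ¬f =ᵐ[volume] 0) (hτ : 0 < τ) (hT : 0 < T) :
    ∃ A > 0, ∃ κ ≥ 0, ∀ x t, τ ≤ t → t ≤ T → A * exp (-(κ * ‖x‖ ^ 2)) ≤ heatFlow N t f x := by
  set g := fun y : EuclideanSpace ℝ (Fin N) => exp (-(1 / (2 * τ)) * ‖y‖ ^ 2)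
  have hg : Integrable g := by
    refine .of_integral_ne_zero ?_
    rw [GaussianFourier.integral_rexp_neg_mul_sq_norm (by positivity)]
    positivity
  have hgf : Integrable fun y => g y * f y := hg.mul_of_top_left hf
  have hgf0 : 0 ≤ᵐ[volume] fun y => g y * f y := by
    filter_upwards [hf0] with y hy using mul_nonneg (exp_pos _).le hy
  have hmass : 0 < ∫ y, g y * f y := by
    refine (integral_nonneg_of_ae hgf0).lt_of_ne' fun hzero => hne ?_
    filter_upwards [(integral_eq_zero_iff_of_nonneg_ae hgf0 hgf).1 hzero] with y hy
    exact (mul_eq_zero.1 hy).resolve_left (exp_ne_zero _)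
  refine ⟨(4 * π * T) ^ (-(N : ℝ) / 2) * ∫ y, g y * f y, by positivity, 1 / (2 * τ),
    by positivity, fun x t hτt htT => ?_⟩
  rw [mul_right_comm, ← integral_const_mul]
  refine integral_mono_ae (hgf.const_mul _)
    ((integrable_heatKernel_sub (hτ.trans_le hτt) x).mul_of_top_left hf) ?_
  filter_upwards [hf0] with y hy
  rw [← mul_assoc]
  exact mul_le_mul_of_nonneg_right (mul_exp_mul_exp_le_heatKernel_sub hτ hτt htT x y) hy

end HeatKernel

section SingularWeight

variable {N : ℕ} {q γ t M : ℝ}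

theorem integrableOn_norm_rpow_ball (hγ0 : 0 ≤ γ) (hγN : γ < N) :
    IntegrableOn (fun y : EuclideanSpace ℝ (Fin N) => ‖y‖ ^ (-γ)) (Metric.ball 0 1) := by
  have hN : 0 < N := Nat.cast_pos.1 (hγ0.trans_lt hγN)
  have : Nonempty (Fin N) := ⟨⟨0, hN⟩⟩
  rw [integrableOn_fun_norm_addHaar volume (f := fun r : ℝ => r ^ (-γ)),
    finrank_euclideanSpace_fin,
    integrableOn_congr_fun (g := fun r : ℝ => r ^ ((N : ℝ) - 1 - γ)) _ measurableSet_Ioo,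
    ← intervalIntegrable_iff_integrableOn_Ioo_of_le zero_le_one]
  · exact intervalIntegral.intervalIntegrable_rpow' (by linarith)
  · intro r hr
    simp only [smul_eq_mul]
    rw [← rpow_natCast, ← rpow_add hr.1, Nat.cast_sub hN, Nat.cast_one, sub_eq_add_neg _ γ]

theorem heatKernel_mul_norm_rpow_le (hγ0 : 0 ≤ γ) (ht : 0 ≤ t) (x y : EuclideanSpace ℝ (Fin N)) :
    heatKernel N t (x - y) * ‖y‖ ^ (-γ) ≤
      (4 * π * t) ^ (-(N : ℝ) / 2) * (Metric.ball 0 1).indicator (fun y => ‖y‖ ^ (-γ)) y +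
        heatKernel N t (x - y) := by
  have hG := heatKernel_nonneg ht (x - y)
  by_cases hy : y ∈ Metric.ball 0 1
  · rw [Set.indicator_of_mem hy]
    exact le_add_of_le_of_nonneg (by gcongr; exact heatKernel_le ht _) hG
  · rw [Set.indicator_of_notMem hy, mul_zero, zero_add]
    rw [mem_ball_zero_iff, not_lt] at hy
    exact mul_le_of_le_one_right hG (rpow_le_one_of_one_le_of_nonpos hy (neg_nonpos.2 hγ0))

theorem integrable_heatKernel_mul_norm_rpow (hγ0 : 0 ≤ γ) (hγN : γ < N) (ht : 0 < t)
    (x : EuclideanSpace ℝ (Fin N)) :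
    Integrable fun y => heatKernel N t (x - y) * ‖y‖ ^ (-γ) := by
  have hball := (integrableOn_norm_rpow_ball hγ0 hγN).integrable_indicator measurableSet_ball
  have hG := integrable_heatKernel_sub ht x
  refine ((hball.const_mul ((4 * π * t) ^ (-(N : ℝ) / 2))).add hG).mono'
    (hG.aestronglyMeasurable.mul (Measurable.aestronglyMeasurable (by fun_prop)))
    (.of_forall fun y => ?_)
  rw [norm_of_nonneg (mul_nonneg (heatKernel_nonneg ht.le _) (by positivity))]
  exact heatKernel_mul_norm_rpow_le hγ0 ht.le x y

theorem heatFlow_one_norm_rpow_le (hγ0 : 0 ≤ γ) (hγN : γ < N) (x : EuclideanSpace ℝ (Fin N)) :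
    heatFlow N 1 (fun y => ‖y‖ ^ (-γ)) x ≤
      (4 * π) ^ (-(N : ℝ) / 2) *
        (∫ y : EuclideanSpace ℝ (Fin N) in Metric.ball 0 1, ‖y‖ ^ (-γ)) + 1 := by
  have hball := (integrableOn_norm_rpow_ball hγ0 hγN).integrable_indicator measurableSet_ball
  have hG := integrable_heatKernel_sub one_pos x
  have hmass : ∫ y, heatKernel N 1 (x - y) = 1 := by
    rw [integral_sub_left_eq_self (heatKernel N 1), integral_heatKernel one_pos]
  calc heatFlow N 1 (fun y => ‖y‖ ^ (-γ)) x
      ≤ ∫ y, ((4 * π * 1) ^ (-(N : ℝ) / 2) *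
          (Metric.ball 0 1).indicator (fun y => ‖y‖ ^ (-γ)) y + heatKernel N 1 (x - y)) :=
        integral_mono (integrable_heatKernel_mul_norm_rpow hγ0 hγN one_pos x)
          ((hball.const_mul _).add hG) (heatKernel_mul_norm_rpow_le hγ0 zero_le_one x)
    _ = _ := by
        rw [integral_add (hball.const_mul _) hG, integral_const_mul,
          integral_indicator measurableSet_ball, hmass, mul_one]

theorem heatFlow_norm_rpow (ht : 0 < t) (x : EuclideanSpace ℝ (Fin N)) :
    heatFlow N t (fun y => ‖y‖ ^ (-γ)) x =
      t ^ (-γ / 2) * heatFlow N 1 (fun y => ‖y‖ ^ (-γ)) ((√t)⁻¹ • x) := by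
  have hs : 0 < √t := sqrt_pos.2 ht
  have hpow : t ^ (-γ / 2) = √t ^ (-γ) := by
    rw [sqrt_eq_rpow, ← rpow_mul ht.le, one_div_mul_eq_div]
  have hnorm (z : EuclideanSpace ℝ (Fin N)) :
      ‖x - √t • z‖ ^ (-γ) = √t ^ (-γ) * ‖(√t)⁻¹ • x - z‖ ^ (-γ) := by
    rw [← mul_rpow hs.le (norm_nonneg _), ← norm_smul_of_nonneg hs.le, smul_sub,
      smul_inv_smul₀ hs.ne']
  simp only [heatFlow_eq_integral_heatKernel_one ht, heatFlow_eq_integral_heatKernel_one one_pos,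
    sqrt_one, one_smul, hnorm, hpow, mul_left_comm _ (√t ^ (-γ)), integral_const_mul]

theorem exists_heatFlow_norm_rpow_le (hγ0 : 0 ≤ γ) (hγN : γ < N) :
    ∃ C, ∀ t, 0 < t → ∀ x : EuclideanSpace ℝ (Fin N),
      heatFlow N t (fun y => ‖y‖ ^ (-γ)) x ≤ C * t ^ (-γ / 2) := by
  refine ⟨(4 * π) ^ (-(N : ℝ) / 2) *
    (∫ y : EuclideanSpace ℝ (Fin N) in Metric.ball 0 1, ‖y‖ ^ (-γ)) + 1, fun t ht x => ?_⟩
  rw [heatFlow_norm_rpow ht, mul_comm]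
  exact mul_le_mul_of_nonneg_right (heatFlow_one_norm_rpow_le hγ0 hγN _) (by positivity)

/-- The nonlinearity `|x|^{-γ} f(x)^q`. -/
noncomputable def singularSource (q γ : ℝ) (f : EuclideanSpace ℝ (Fin N) → ℝ)
    (y : EuclideanSpace ℝ (Fin N)) : ℝ :=
  ‖y‖ ^ (-γ) * f y ^ q

variable {f : EuclideanSpace ℝ (Fin N) → ℝ}

theorem singularSource_nonneg (hf0 : ∀ y, 0 ≤ f y) (y : EuclideanSpace ℝ (Fin N)) :
    0 ≤ singularSource q γ f y :=
  mul_nonneg (by positivity) (rpow_nonneg (hf0 y) q)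

theorem integrable_heatKernel_mul_singularSource (hq : 0 ≤ q) (hγ0 : 0 ≤ γ) (hγN : γ < N)
    (ht : 0 < t) (hf : Measurable f) (hf0 : ∀ y, 0 ≤ f y) (hfM : ∀ y, f y ≤ M)
    (x : EuclideanSpace ℝ (Fin N)) :
    Integrable fun y => heatKernel N t (x - y) * singularSource q γ f y := by
  simp only [singularSource, ← mul_assoc]
  refine (integrable_heatKernel_mul_norm_rpow hγ0 hγN ht x).mul_bdd (c := M ^ q)
    (hf.pow_const q).aestronglyMeasurable (.of_forall fun y => ?_)
  rw [norm_of_nonneg (rpow_nonneg (hf0 y) q)]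
  exact rpow_le_rpow (hf0 y) (hfM y) hq

theorem heatFlow_singularSource_le (hq : 0 ≤ q) (hγ0 : 0 ≤ γ) (hγN : γ < N)
    (ht : 0 < t) (hf : Measurable f) (hf0 : ∀ y, 0 ≤ f y) (hfM : ∀ y, f y ≤ M)
    (x : EuclideanSpace ℝ (Fin N)) :
    heatFlow N t (singularSource q γ f) x ≤ M ^ q * heatFlow N t (fun y => ‖y‖ ^ (-γ)) x := by
  rw [heatFlow, heatFlow, ← integral_const_mul]
  refine integral_mono (integrable_heatKernel_mul_singularSource hq hγ0 hγN ht hf hf0 hfM x)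
    ((integrable_heatKernel_mul_norm_rpow hγ0 hγN ht x).const_mul _) fun y => ?_
  have hG := heatKernel_nonneg ht.le (x - y)
  have hpow : f y ^ q ≤ M ^ q := rpow_le_rpow (hf0 y) (hfM y) hq
  calc heatKernel N t (x - y) * (‖y‖ ^ (-γ) * f y ^ q)
      ≤ heatKernel N t (x - y) * (‖y‖ ^ (-γ) * M ^ q) := by gcongr
    _ = M ^ q * (heatKernel N t (x - y) * ‖y‖ ^ (-γ)) := by ring

end SingularWeight

section Envelope

/-- The profile `(|x| + √t)^r e^{-κ|x|²}`. The asserted lower bound is, up to a power of `t`, the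
undamped profile `κ = 0`; the Gaussian damping makes it comparable to a heat flow at infinity. -/
noncomputable def envelope {E : Type*} [Norm E] (r κ : ℝ) (x : E) (t : ℝ) : ℝ :=
  (‖x‖ + √t) ^ r * exp (-(κ * ‖x‖ ^ 2))

variable {E : Type*} [SeminormedAddCommGroup E] {r γ κ θ t σ T : ℝ}

theorem envelope_pos (r κ : ℝ) (x : E) (ht : 0 < t) : 0 < envelope r κ x t := by
  unfold envelope
  positivity

theorem envelope_one_le_one (hr : r ≤ 0) (hκ : 0 ≤ κ) (x : E) : envelope r κ x 1 ≤ 1 := by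
  have hbase : 1 ≤ ‖x‖ + √1 := by simp
  exact mul_le_one₀ (rpow_le_one_of_one_le_of_nonpos hbase hr) (exp_pos _).le
    (exp_le_one_iff.2 (neg_nonpos.2 (by positivity)))

theorem envelope_antitone {κ' : ℝ} (r : ℝ) (h : κ ≤ κ') (x : E) (t : ℝ) :
    envelope r κ' x t ≤ envelope r κ x t := by
  unfold envelope
  gcongr

theorem envelope_rpow (r κ q : ℝ) (x : E) (t : ℝ) :
    envelope r κ x t ^ q = envelope (r * q) (q * κ) x t := by
  rw [envelope, mul_rpow (by positivity) (exp_pos _).le, ← rpow_mul (by positivity), ← exp_mul,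
    envelope]
  ring_nf

theorem envelope_sub_le (s κ : ℝ) (hγ : 0 ≤ γ) {y : E} (hy : 0 < ‖y‖) (t : ℝ) :
    envelope (s - γ) κ y t ≤ ‖y‖ ^ (-γ) * envelope s κ y t := by
  have hweight : (‖y‖ + √t) ^ (-γ) ≤ ‖y‖ ^ (-γ) :=
    rpow_le_rpow_of_nonpos hy (le_add_of_nonneg_right (sqrt_nonneg t)) (neg_nonpos.2 hγ)
  calc envelope (s - γ) κ y t = (‖y‖ + √t) ^ (-γ) * envelope s κ y t := by
        rw [envelope, envelope, ← mul_assoc, ← rpow_add (by positivity), sub_eq_neg_add]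
    _ ≤ ‖y‖ ^ (-γ) * envelope s κ y t := by
        gcongr
        unfold envelope
        positivity

theorem mul_norm_sub_sq_le (hθ0 : 0 ≤ θ) (hθ1 : θ < 1) (x w : E) :
    θ * ‖x - w‖ ^ 2 ≤ ‖x‖ ^ 2 + θ / (1 - θ) * ‖w‖ ^ 2 := by
  have hθ : 0 < 1 - θ := sub_pos.2 hθ1
  have hsquare : ‖x‖ ^ 2 + θ / (1 - θ) * ‖w‖ ^ 2 - θ * (‖x‖ + ‖w‖) ^ 2 =
      ((1 - θ) * ‖x‖ - θ * ‖w‖) ^ 2 / (1 - θ) := by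
    field_simp
    ring
  have htriangle : θ * ‖x - w‖ ^ 2 ≤ θ * (‖x‖ + ‖w‖) ^ 2 := by
    gcongr
    exact norm_sub_le x w
  have hnonneg : 0 ≤ ((1 - θ) * ‖x‖ - θ * ‖w‖) ^ 2 / (1 - θ) := by positivity
  linarith

variable [NormedSpace ℝ E]

theorem norm_sub_smul_add_sqrt_le (hσ : 0 ≤ σ) (hσt : σ ≤ t) (x z : E) :
    ‖x - √(t - σ) • z‖ + √σ ≤ (‖x‖ + √t) * (‖z‖ + √1) := by
  have hle : √(t - σ) ≤ √t := sqrt_le_sqrt (sub_le_self t hσ)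
  have hσle : √σ ≤ √t := sqrt_le_sqrt hσt
  calc ‖x - √(t - σ) • z‖ + √σ ≤ ‖x‖ + √(t - σ) * ‖z‖ + √σ := by
        gcongr
        exact (norm_sub_le _ _).trans_eq (by rw [norm_smul_of_nonneg (sqrt_nonneg _)])
    _ ≤ ‖x‖ + √t * ‖z‖ + √t := by gcongr
    _ ≤ (‖x‖ + √t) * (‖z‖ + √1) := by
        rw [sqrt_one]
        linarith [mul_nonneg (norm_nonneg x) (norm_nonneg z)]

theorem envelope_mul_envelope_le (hr : r ≤ 0) (hκ : 0 ≤ κ) (hθ0 : 0 ≤ θ) (hθ1 : θ < 1)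
    (hσ : 0 < σ) (hσt : σ ≤ t) (htT : t ≤ T) (x z : E) :
    envelope r κ x t * envelope r (κ * (θ / (1 - θ) * T)) z 1 ≤
      envelope r (θ * κ) (x - √(t - σ) • z) σ := by
  have hbase : (‖x‖ + √t) ^ r * (‖z‖ + √1) ^ r ≤ (‖x - √(t - σ) • z‖ + √σ) ^ r := by
    rw [← mul_rpow (by positivity) (by positivity)]
    exact rpow_le_rpow_of_nonpos (by positivity) (norm_sub_smul_add_sqrt_le hσ.le hσt x z) hr
  have hexponent : θ * κ * ‖x - √(t - σ) • z‖ ^ 2 ≤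
      κ * ‖x‖ ^ 2 + κ * (θ / (1 - θ) * T) * ‖z‖ ^ 2 :=
    calc θ * κ * ‖x - √(t - σ) • z‖ ^ 2 = κ * (θ * ‖x - √(t - σ) • z‖ ^ 2) := by ring
      _ ≤ κ * (‖x‖ ^ 2 + θ / (1 - θ) * ‖√(t - σ) • z‖ ^ 2) := by
          gcongr
          exact mul_norm_sub_sq_le hθ0 hθ1 x _
      _ = κ * (‖x‖ ^ 2 + θ / (1 - θ) * ((t - σ) * ‖z‖ ^ 2)) := by
          rw [norm_smul_of_nonneg (sqrt_nonneg _), mul_pow, sq_sqrt (sub_nonneg.2 hσt)]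
      _ ≤ κ * (‖x‖ ^ 2 + θ / (1 - θ) * (T * ‖z‖ ^ 2)) := by
          gcongr
          linarith
      _ = κ * ‖x‖ ^ 2 + κ * (θ / (1 - θ) * T) * ‖z‖ ^ 2 := by ring
  rw [envelope, envelope, envelope, mul_mul_mul_comm, ← exp_add]
  exact mul_le_mul hbase (exp_le_exp.2 (by linarith)) (exp_pos _).le (by positivity)

end Envelope

section EnvelopeMean

/-- The mean of the profile at time `1` against the heat kernel. For `κ = 0` and `r = -γ/(1-q)` it
is the constant `η₀` of the theorem. -/
noncomputable def envelopeMean (N : ℕ) (r κ : ℝ) : ℝ :=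
  ∫ z : EuclideanSpace ℝ (Fin N), heatKernel N 1 z * envelope r κ z 1

variable {N : ℕ} {r κ θ t σ T : ℝ}

theorem envelopeMean_zero (N : ℕ) (r : ℝ) :
    envelopeMean N r 0 = (4 * π) ^ (-(N : ℝ) / 2) *
      ∫ z : EuclideanSpace ℝ (Fin N), exp (-‖z‖ ^ 2 / 4) * (1 + ‖z‖) ^ r := by
  simp only [envelopeMean, heatKernel, envelope, mul_one, zero_mul, neg_zero, exp_zero, sqrt_one,
    mul_assoc, integral_const_mul, add_comm]

theorem integrable_heatKernel_mul_envelope (hr : r ≤ 0) (hκ : 0 ≤ κ) :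
    Integrable fun z : EuclideanSpace ℝ (Fin N) => heatKernel N 1 z * envelope r κ z 1 := by
  have hmeas : Measurable fun z : EuclideanSpace ℝ (Fin N) => envelope r κ z 1 := by
    unfold envelope
    fun_prop
  refine (integrable_of_integral_eq_one (integral_heatKernel one_pos)).mul_bdd (c := 1)
    hmeas.aestronglyMeasurable (.of_forall fun z => ?_)
  rw [norm_of_nonneg (envelope_pos r κ z one_pos).le]
  exact envelope_one_le_one hr hκ z

theorem envelopeMean_pos (hr : r ≤ 0) (hκ : 0 ≤ κ) : 0 < envelopeMean N r κ := by
  have hpos (z : EuclideanSpace ℝ (Fin N)) : 0 < heatKernel N 1 z * envelope r κ z 1 :=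
    mul_pos (heatKernel_pos one_pos z) (envelope_pos r κ z one_pos)
  refine (integral_pos_iff_support_of_nonneg (fun z => (hpos z).le)
    (integrable_heatKernel_mul_envelope hr hκ)).2 ?_
  rw [Set.eq_univ_of_forall fun z => Function.mem_support.2 (hpos z).ne']
  exact Measure.measure_univ_pos.2 (NeZero.ne _)

theorem envelopeMean_antitone {κ' : ℝ} (hr : r ≤ 0) (hκ : 0 ≤ κ) (h : κ ≤ κ') :
    envelopeMean N r κ' ≤ envelopeMean N r κ := by
  have hG := heatKernel_nonneg (N := N) zero_le_one
  refine integral_mono (integrable_heatKernel_mul_envelope hr (hκ.trans h))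
    (integrable_heatKernel_mul_envelope hr hκ) fun z => ?_
  exact mul_le_mul_of_nonneg_left (envelope_antitone r h z 1) (hG z)

theorem mul_envelope_mul_envelopeMean_le_heatFlow (hr : r ≤ 0) (hκ : 0 ≤ κ) (hθ0 : 0 ≤ θ)
    (hθ1 : θ < 1) (hσ : 0 < σ) (hσt : σ < t) (htT : t ≤ T) {f : EuclideanSpace ℝ (Fin N) → ℝ}
    {x : EuclideanSpace ℝ (Fin N)} (hint : Integrable fun y => heatKernel N (t - σ) (x - y) * f y)
    {a : ℝ} (ha : 0 ≤ a) (hf : ∀ᵐ y, a * envelope r (θ * κ) y σ ≤ f y) :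
    a * (envelope r κ x t * envelopeMean N r (κ * (θ / (1 - θ) * T))) ≤
      heatFlow N (t - σ) f x := by
  set μ := κ * (θ / (1 - θ) * T)
  have hs : 0 < t - σ := sub_pos.2 hσt
  have hsqrt : √(t - σ) ≠ 0 := (sqrt_pos.2 hs).ne'
  have hmean : envelopeMean N r μ =
      heatFlow N (t - σ) (fun y => envelope r μ ((√(t - σ))⁻¹ • (x - y)) 1) x := by
    simp only [heatFlow_eq_integral_heatKernel_one hs, sub_sub_cancel, inv_smul_smul₀ hsqrt,
      envelopeMean]
  rw [← mul_assoc, hmean, heatFlow, ← integral_const_mul]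
  have hG := heatKernel_nonneg (N := N) hs.le
  refine integral_mono_of_nonneg (.of_forall fun y => ?_) hint ?_
  · exact mul_nonneg (mul_nonneg ha (envelope_pos r κ x (hσ.trans hσt)).le)
      (mul_nonneg (hG _) (envelope_pos r μ _ one_pos).le)
  · filter_upwards [hf] with y hy
    have hsubmul := envelope_mul_envelope_le hr hκ hθ0 hθ1 hσ hσt.le htT x
      ((√(t - σ))⁻¹ • (x - y))
    rw [smul_inv_smul₀ hsqrt, sub_sub_cancel] at hsubmul
    rw [mul_left_comm, mul_assoc]
    exact mul_le_mul_of_nonneg_left ((mul_le_mul_of_nonneg_left hsubmul ha).trans hy) (hG _)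

end EnvelopeMean

section RealInequalities

variable {q K m : ℝ}

theorem integral_sub_rpow {s : ℝ} (hs : 0 ≤ s) (τ t : ℝ) :
    ∫ σ in τ..t, (σ - τ) ^ s = (t - τ) ^ (s + 1) / (s + 1) := by
  rw [intervalIntegral.integral_comp_sub_right (fun σ => σ ^ s), sub_self,
    integral_rpow (.inl (by linarith)), zero_rpow (by linarith), sub_zero]

theorem rpow_one_div_le_iff (hq : q < 1) (hK : 0 ≤ K) (hm : 0 < m) :
    K ^ (1 / (1 - q)) ≤ m ↔ K * m ^ q ≤ m := by
  rw [one_div, rpow_inv_le_iff_of_pos hK hm.le (sub_pos.2 hq), rpow_sub hm, rpow_one,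
    le_div_iff₀ (rpow_pos_of_pos hm q)]

theorem le_rpow_one_div_iff (hq : q < 1) (hK : 0 ≤ K) (hm : 0 < m) :
    m ≤ K ^ (1 / (1 - q)) ↔ m ≤ K * m ^ q := by
  rw [one_div, le_rpow_inv_iff_of_pos hm.le hK (sub_pos.2 hq), rpow_sub hm, rpow_one,
    div_le_iff₀ (rpow_pos_of_pos hm q)]

theorem rpow_one_div_le_of_self_improving {ι : Type*} {f : ι → ℝ} (hq : q < 1) (hK : 0 ≤ K)
    (hm : 0 < m) (hmf : ∀ i, m ≤ f i)
    (himprove : ∀ c > 0, (∀ i, c ≤ f i) → ∀ i, K * c ^ q ≤ f i) (i : ι) :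
    K ^ (1 / (1 - q)) ≤ f i := by
  have : Nonempty ι := ⟨i⟩
  have hbdd : BddBelow (Set.range f) := ⟨m, Set.forall_mem_range.2 hmf⟩
  have hinf : 0 < ⨅ j, f j := hm.trans_le (le_ciInf hmf)
  refine ((rpow_one_div_le_iff hq hK hinf).2 ?_).trans (ciInf_le hbdd i)
  exact le_ciInf (himprove _ hinf (ciInf_le hbdd))

end RealInequalities

section Barrier

/-- The time-shifted lower barrier `(t-τ)^{1/(1-q)} (|x|+√t)^{-γ/(1-q)} e^{-κ|x|²}`. -/
noncomputable def barrier {E : Type*} [Norm E] (q γ τ κ : ℝ) (x : E) (t : ℝ) : ℝ :=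
  (t - τ) ^ (1 / (1 - q)) * envelope (-γ / (1 - q)) κ x t

variable {E : Type*} [SeminormedAddCommGroup E] {q γ τ κ t T c : ℝ}

theorem barrier_pos (q γ κ : ℝ) (hτ : 0 ≤ τ) (ht : τ < t) (x : E) : 0 < barrier q γ τ κ x t :=
  mul_pos (rpow_pos_of_pos (sub_pos.2 ht) _) (envelope_pos _ _ x (hτ.trans_lt ht))

theorem continuous_barrier_damping (q γ τ : ℝ) (x : E) (t : ℝ) :
    Continuous fun κ => barrier q γ τ κ x t := by
  unfold barrier envelope
  fun_prop

theorem barrier_le_gaussian (hq : q < 1) (hγ : 0 ≤ γ) (hτ : 0 < τ) (ht : τ < t) (htT : t ≤ T)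
    (x : E) : barrier q γ τ κ x t ≤
      T ^ (1 / (1 - q)) * √τ ^ (-γ / (1 - q)) * exp (-(κ * ‖x‖ ^ 2)) := by
  have hq' : 0 < 1 - q := sub_pos.2 hq
  have hτt : 0 < t - τ := sub_pos.2 ht
  have htime : (t - τ) ^ (1 / (1 - q)) ≤ T ^ (1 / (1 - q)) :=
    rpow_le_rpow hτt.le (by linarith) (by positivity)
  have hspace : (‖x‖ + √t) ^ (-γ / (1 - q)) ≤ √τ ^ (-γ / (1 - q)) := by
    refine rpow_le_rpow_of_nonpos (sqrt_pos.2 hτ) ?_ ?_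
    · exact le_add_of_nonneg_of_le (norm_nonneg x) (sqrt_le_sqrt ht.le)
    · exact div_nonpos_of_nonpos_of_nonneg (neg_nonpos.2 hγ) hq'.le
  have hT : 0 ≤ T := by linarith
  rw [barrier, envelope, ← mul_assoc]
  gcongr

-- The exponent `r = -γ/(1-q)` is the one for which `r q - γ = r`.
theorem mul_envelope_le_singularSource {N : ℕ} (hq0 : 0 ≤ q) (hq1 : q < 1) (hγ : 0 ≤ γ)
    (hτ : 0 ≤ τ) (ht : τ < t) (hc : 0 ≤ c) {f : EuclideanSpace ℝ (Fin N) → ℝ}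
    {y : EuclideanSpace ℝ (Fin N)} (hy : y ≠ 0) (hf : c * barrier q γ τ κ y t ≤ f y) :
    c ^ q * (t - τ) ^ (q / (1 - q)) * envelope (-γ / (1 - q)) (q * κ) y t ≤
      singularSource q γ f y := by
  have hq' : 1 - q ≠ 0 := (sub_pos.2 hq1).ne'
  have hτt : 0 ≤ t - τ := (sub_pos.2 ht).le
  have hspatial : -γ / (1 - q) = -γ / (1 - q) * q - γ := by
    field_simp
    ring
  have hweight := envelope_sub_le (-γ / (1 - q) * q) (q * κ) hγ (norm_pos_iff.2 hy) t
  rw [← hspatial] at hweight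
  have hbarrier := (barrier_pos q γ κ hτ ht y).le
  have henvelope := (envelope_pos (-γ / (1 - q)) κ y (hτ.trans_lt ht)).le
  calc c ^ q * (t - τ) ^ (q / (1 - q)) * envelope (-γ / (1 - q)) (q * κ) y t
      ≤ c ^ q * (t - τ) ^ (q / (1 - q)) *
          (‖y‖ ^ (-γ) * envelope (-γ / (1 - q) * q) (q * κ) y t) := by
        gcongr
    _ = ‖y‖ ^ (-γ) * (c * barrier q γ τ κ y t) ^ q := by
        rw [← envelope_rpow, barrier, mul_rpow hc (by positivity), mul_rpow (by positivity)
          henvelope, ← rpow_mul hτt, one_div_mul_eq_div]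
        ring
    _ ≤ singularSource q γ f y := by
        unfold singularSource
        gcongr

end Barrier

/-- A non-negative, locally bounded supersolution of `u_t - Δu = |x|^{-γ} u^q`, `u(·,0) = u₀`, in
the mild sense: the Duhamel formula holds as an inequality. Times `t < 0` are irrelevant, whence
measurability on `ℝ^N × ℝ≥0`. -/
structure IsMildSupersolution {N : ℕ} (q γ : ℝ) (u₀ : EuclideanSpace ℝ (Fin N) → ℝ)
    (u : EuclideanSpace ℝ (Fin N) → ℝ → ℝ) : Prop where
  nonneg : ∀ x t, 0 ≤ t → 0 ≤ u x t
  measurable : Measurable fun p : EuclideanSpace ℝ (Fin N) × NNReal => u p.1 p.2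
  bounded : ∀ T, ∃ M, ∀ t ∈ Set.Icc 0 T, ∀ x, u x t ≤ M
  duhamel_le : ∀ t, 0 < t → ∀ x, heatFlow N t u₀ x +
    ∫ σ in 0..t, heatFlow N (t - σ) (singularSource q γ fun y => u y σ) x ≤ u x t

namespace IsMildSupersolution

variable {N : ℕ} {q γ τ t σ T c κ : ℝ} {u₀ : EuclideanSpace ℝ (Fin N) → ℝ}
  {u : EuclideanSpace ℝ (Fin N) → ℝ → ℝ}

theorem measurable_slice (hu : IsMildSupersolution q γ u₀ u) (hσ : 0 ≤ σ) :
    Measurable fun y => u y σ :=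
  hu.measurable.comp (measurable_id.prodMk (measurable_const (a := (⟨σ, hσ⟩ : NNReal))))

theorem integrable_heatKernel_mul_source (hu : IsMildSupersolution q γ u₀ u) (hq : 0 ≤ q)
    (hγ0 : 0 ≤ γ) (hγN : γ < N) (hσ : 0 ≤ σ) (hσt : σ < t) (x : EuclideanSpace ℝ (Fin N)) :
    Integrable fun y => heatKernel N (t - σ) (x - y) * singularSource q γ (fun y => u y σ) y := by
  obtain ⟨M, hM⟩ := hu.bounded t
  exact integrable_heatKernel_mul_singularSource hq hγ0 hγN (sub_pos.2 hσt)
    (hu.measurable_slice hσ) (fun y => hu.nonneg y σ hσ) (hM σ ⟨hσ, hσt.le⟩) x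

theorem heatFlow_source_nonneg (hu : IsMildSupersolution q γ u₀ u) (hσ : 0 ≤ σ) (hσt : σ ≤ t)
    (x : EuclideanSpace ℝ (Fin N)) :
    0 ≤ heatFlow N (t - σ) (singularSource q γ fun y => u y σ) x :=
  heatFlow_nonneg (sub_nonneg.2 hσt)
    (.of_forall (singularSource_nonneg fun y => hu.nonneg y σ hσ)) x

theorem aestronglyMeasurable_heatFlow_source (hu : IsMildSupersolution q γ u₀ u) (t : ℝ)
    (x : EuclideanSpace ℝ (Fin N)) :
    AEStronglyMeasurable (fun σ => heatFlow N (t - σ) (singularSource q γ fun y => u y σ) x)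
      (volume.restrict (Set.Ioc 0 t)) := by
  have hu' : Measurable fun p : ℝ × EuclideanSpace ℝ (Fin N) => u p.2 p.1.toNNReal :=
    hu.measurable.comp (measurable_snd.prodMk measurable_fst.real_toNNReal)
  have hkernel : Measurable fun p : ℝ × EuclideanSpace ℝ (Fin N) =>
      heatKernel N (t - p.1) (x - p.2) :=
    measurable_heatKernel.comp
      ((measurable_const.sub measurable_fst).prodMk (measurable_const.sub measurable_snd))
  have hintegrand : Measurable fun p : ℝ × EuclideanSpace ℝ (Fin N) =>
      heatKernel N (t - p.1) (x - p.2) *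
        singularSource q γ (fun y => u y p.1.toNNReal) p.2 :=
    hkernel.mul ((measurable_snd.norm.pow_const _).mul (hu'.pow_const _))
  refine (hintegrand.stronglyMeasurable.integral_prod_right'
    (ν := volume)).aestronglyMeasurable.congr ?_
  filter_upwards [ae_restrict_mem measurableSet_Ioc] with σ hσ
  rw [heatFlow, Real.coe_toNNReal σ hσ.1.le]

theorem intervalIntegrable_heatFlow_source (hu : IsMildSupersolution q γ u₀ u) (hq : 0 ≤ q)
    (hγ0 : 0 ≤ γ) (hγ2 : γ < 2) (hγN : γ < N) (ht : 0 ≤ t) (x : EuclideanSpace ℝ (Fin N)) :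
    IntervalIntegrable (fun σ => heatFlow N (t - σ) (singularSource q γ fun y => u y σ) x)
      volume 0 t := by
  obtain ⟨M, hM⟩ := hu.bounded t
  obtain ⟨C, hC⟩ := exists_heatFlow_norm_rpow_le hγ0 hγN
  have hdominating : IntervalIntegrable (fun σ => M ^ q * (C * (t - σ) ^ (-γ / 2))) volume 0 t := by
    have hrpow : IntervalIntegrable (fun s : ℝ => s ^ (-γ / 2)) volume t 0 :=
      intervalIntegral.intervalIntegrable_rpow' (by linarith)
    simpa using ((hrpow.comp_sub_left t).const_mul C).const_mul (M ^ q)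
  refine hdominating.mono_fun ?_ ?_
  · rw [Set.uIoc_of_le ht]
    exact hu.aestronglyMeasurable_heatFlow_source t x
  · rw [Set.uIoc_of_le ht, restrict_Ioo_eq_restrict_Ioc.symm]
    filter_upwards [ae_restrict_mem measurableSet_Ioo] with σ hσ
    have hM0 : 0 ≤ M := (hu.nonneg x σ hσ.1.le).trans (hM σ ⟨hσ.1.le, hσ.2.le⟩ x)
    rw [norm_of_nonneg (hu.heatFlow_source_nonneg hσ.1.le hσ.2.le x)]
    refine le_trans ?_ (le_norm_self _)
    refine (heatFlow_singularSource_le hq hγ0 hγN (sub_pos.2 hσ.2) (hu.measurable_slice hσ.1.le)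
      (fun y => hu.nonneg y σ hσ.1.le) (hM σ ⟨hσ.1.le, hσ.2.le⟩) x).trans ?_
    gcongr
    exact hC _ (sub_pos.2 hσ.2) x

theorem heatFlow_le (hu : IsMildSupersolution q γ u₀ u) (ht : 0 < t)
    (x : EuclideanSpace ℝ (Fin N)) : heatFlow N t u₀ x ≤ u x t :=
  (le_add_of_nonneg_right (intervalIntegral.integral_nonneg ht.le fun _ hσ =>
    hu.heatFlow_source_nonneg hσ.1 hσ.2 x)).trans (hu.duhamel_le t ht x)

theorem integral_heatFlow_source_le (hu : IsMildSupersolution q γ u₀ u) (hq : 0 ≤ q)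
    (hγ0 : 0 ≤ γ) (hγ2 : γ < 2) (hγN : γ < N) (hu₀ : 0 ≤ᵐ[volume] u₀) (hτ : 0 ≤ τ) (hτt : τ < t)
    (x : EuclideanSpace ℝ (Fin N)) :
    ∫ σ in τ..t, heatFlow N (t - σ) (singularSource q γ fun y => u y σ) x ≤ u x t := by
  have ht : 0 < t := hτ.trans_lt hτt
  have hnonneg : 0 ≤ᵐ[volume.restrict (Set.Ioc 0 t)]
      fun σ => heatFlow N (t - σ) (singularSource q γ fun y => u y σ) x := by
    filter_upwards [ae_restrict_mem measurableSet_Ioc] with σ hσ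
    exact hu.heatFlow_source_nonneg hσ.1.le hσ.2 x
  calc ∫ σ in τ..t, heatFlow N (t - σ) (singularSource q γ fun y => u y σ) x
      ≤ ∫ σ in 0..t, heatFlow N (t - σ) (singularSource q γ fun y => u y σ) x :=
        intervalIntegral.integral_mono_interval hτ hτt.le le_rfl hnonneg
          (hu.intervalIntegrable_heatFlow_source hq hγ0 hγ2 hγN ht.le x)
    _ ≤ u x t := (le_add_of_nonneg_left (heatFlow_nonneg ht.le hu₀ x)).trans (hu.duhamel_le t ht x)

theorem le_heatFlow_source (hu : IsMildSupersolution q γ u₀ u) (hq0 : 0 ≤ q) (hq1 : q < 1)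
    (hγ0 : 0 ≤ γ) (hγN : γ < N) (hτ : 0 ≤ τ) (hτσ : τ < σ) (hσt : σ < t) (htT : t ≤ T)
    (hκ : 0 ≤ κ) (hc : 0 ≤ c) (hlower : ∀ y, c * barrier q γ τ κ y σ ≤ u y σ)
    (x : EuclideanSpace ℝ (Fin N)) :
    c ^ q * (σ - τ) ^ (q / (1 - q)) * (envelope (-γ / (1 - q)) (√q * κ) x t *
      envelopeMean N (-γ / (1 - q)) (√q * κ * (√q / (1 - √q) * T))) ≤
        heatFlow N (t - σ) (singularSource q γ fun y => u y σ) x := by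
  have : Nonempty (Fin N) := ⟨⟨0, Nat.cast_pos.1 (hγ0.trans_lt hγN)⟩⟩
  have hσ : 0 < σ := hτ.trans_lt hτσ
  have hr : -γ / (1 - q) ≤ 0 :=
    div_nonpos_of_nonpos_of_nonneg (neg_nonpos.2 hγ0) (sub_pos.2 hq1).le
  refine mul_envelope_mul_envelopeMean_le_heatFlow hr (by positivity) (sqrt_nonneg q)
    ((sqrt_lt' one_pos).2 (by rwa [one_pow])) hσ hσt htT
    (hu.integrable_heatKernel_mul_source hq0 hγ0 hγN hσ.le hσt x) (by positivity) ?_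
  filter_upwards [Measure.ae_ne volume 0] with y hy
  rw [← mul_assoc (√q), mul_self_sqrt hq0]
  exact mul_envelope_le_singularSource hq0 hq1 hγ0 hτ hτσ hc hy (hlower y)

theorem improve_lower_bound (hu : IsMildSupersolution q γ u₀ u) (hq0 : 0 ≤ q) (hq1 : q < 1)
    (hγ0 : 0 ≤ γ) (hγ2 : γ < 2) (hγN : γ < N) (hu₀ : 0 ≤ᵐ[volume] u₀) (hτ : 0 ≤ τ) (hκ : 0 ≤ κ)
    (hc : 0 ≤ c) (hlower : ∀ x t, τ < t → t ≤ T → c * barrier q γ τ κ x t ≤ u x t)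
    (x : EuclideanSpace ℝ (Fin N)) (hτt : τ < t) (htT : t ≤ T) :
    (1 - q) * envelopeMean N (-γ / (1 - q)) (√q * κ * (√q / (1 - √q) * T)) * c ^ q *
      barrier q γ τ (√q * κ) x t ≤ u x t := by
  have hq' : 0 < 1 - q := sub_pos.2 hq1
  set D := envelope (-γ / (1 - q)) (√q * κ) x t *
    envelopeMean N (-γ / (1 - q)) (√q * κ * (√q / (1 - √q) * T))
  have hexponent : q / (1 - q) + 1 = 1 / (1 - q) := by
    field_simp
    ring
  have htime : ∫ σ in τ..t, (σ - τ) ^ (q / (1 - q)) = (1 - q) * (t - τ) ^ (1 / (1 - q)) := by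
    rw [integral_sub_rpow (by positivity), hexponent]
    field_simp
  have hlowerIntegrable :
      IntervalIntegrable (fun σ => c ^ q * (σ - τ) ^ (q / (1 - q)) * D) volume τ t := by
    refine Continuous.intervalIntegrable ?_ τ t
    have hs : 0 ≤ q / (1 - q) := by positivity
    fun_prop (disch := assumption)
  have hsource := (hu.intervalIntegrable_heatFlow_source hq0 hγ0 hγ2 hγN (hτ.trans hτt.le)
    x).mono_set (Set.uIcc_subset_uIcc_right (Set.mem_uIcc_of_le hτ hτt.le))
  calc (1 - q) * envelopeMean N (-γ / (1 - q)) (√q * κ * (√q / (1 - √q) * T)) * c ^ q *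
        barrier q γ τ (√q * κ) x t
      = ∫ σ in τ..t, c ^ q * (σ - τ) ^ (q / (1 - q)) * D := by
        rw [intervalIntegral.integral_mul_const, intervalIntegral.integral_const_mul, htime,
          barrier]
        ring
    _ ≤ ∫ σ in τ..t, heatFlow N (t - σ) (singularSource q γ fun y => u y σ) x :=
        intervalIntegral.integral_mono_on_of_le_Ioo hτt.le hlowerIntegrable hsource
          fun σ hσ => hu.le_heatFlow_source hq0 hq1 hγ0 hγN hτ hσ.1 hσ.2 htT hκ hc
            (fun y => hlower y σ hσ.1 (hσ.2.le.trans htT)) x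
    _ ≤ u x t := hu.integral_heatFlow_source_le hq0 hγ0 hγ2 hγN hu₀ hτ hτt x

theorem exists_damped_lower_bound (hu : IsMildSupersolution q γ u₀ u) (hq1 : q < 1)
    (hγ0 : 0 ≤ γ) (hu₀ : MemLp u₀ ⊤) (hu₀nonneg : 0 ≤ᵐ[volume] u₀) (hu₀ne : ¬u₀ =ᵐ[volume] 0)
    (hτ : 0 < τ) (hT : 0 < T) :
    ∃ c > 0, ∃ κ ≥ 0, ∀ x t, τ < t → t ≤ T → c * barrier q γ τ κ x t ≤ u x t := by
  obtain ⟨A, hA, κ, hκ, hgauss⟩ := exists_gaussian_le_heatFlow hu₀ hu₀nonneg hu₀ne hτ hT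
  set B := T ^ (1 / (1 - q)) * √τ ^ (-γ / (1 - q))
  have hB : 0 < B := by positivity
  refine ⟨A / B, by positivity, κ, hκ, fun x t hτt htT => ?_⟩
  calc A / B * barrier q γ τ κ x t ≤ A / B * (B * exp (-(κ * ‖x‖ ^ 2))) := by
        gcongr
        exact barrier_le_gaussian hq1 hγ0 hτ hτt htT x
    _ = A * exp (-(κ * ‖x‖ ^ 2)) := by field_simp
    _ ≤ heatFlow N t u₀ x := hgauss x t hτt.le htT
    _ ≤ u x t := hu.heatFlow_le (hτ.trans hτt) x

theorem iterate_lower_bound (hu : IsMildSupersolution q γ u₀ u) (hq0 : 0 ≤ q) (hq1 : q < 1)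
    (hγ0 : 0 ≤ γ) (hγ2 : γ < 2) (hγN : γ < N) (hu₀ : 0 ≤ᵐ[volume] u₀) (hτ : 0 ≤ τ) (hT : 0 ≤ T)
    (hκ : 0 ≤ κ) {m : ℝ} (hm : 0 ≤ m)
    (hmK : m ≤ (1 - q) * envelopeMean N (-γ / (1 - q)) (κ * (√q / (1 - √q) * T)) * m ^ q)
    (hlower : ∀ x t, τ < t → t ≤ T → m * barrier q γ τ κ x t ≤ u x t) (k : ℕ) :
    ∀ x t, τ < t → t ≤ T → m * barrier q γ τ (√q ^ k * κ) x t ≤ u x t := by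
  have hq' : 0 < 1 - q := sub_pos.2 hq1
  have hsqrt : √q < 1 := (sqrt_lt' one_pos).2 (by rwa [one_pow])
  have hr : -γ / (1 - q) ≤ 0 := div_nonpos_of_nonpos_of_nonneg (neg_nonpos.2 hγ0) hq'.le
  induction k with
  | zero => simpa only [pow_zero, one_mul] using hlower
  | succ k ih =>
    intro x t hτt htT
    have hdamping : √q ^ (k + 1) * κ ≤ κ :=
      mul_le_of_le_one_left hκ (pow_le_one₀ (sqrt_nonneg q) hsqrt.le)
    have hmean : envelopeMean N (-γ / (1 - q)) (κ * (√q / (1 - √q) * T)) ≤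
        envelopeMean N (-γ / (1 - q)) (√q ^ (k + 1) * κ * (√q / (1 - √q) * T)) :=
      envelopeMean_antitone hr (by positivity) (by gcongr)
    have himproved := hu.improve_lower_bound hq0 hq1 hγ0 hγ2 hγN hu₀ hτ (by positivity) hm ih x
      hτt htT
    rw [← mul_assoc (√q), ← pow_succ'] at himproved
    refine le_trans (mul_le_mul_of_nonneg_right (hmK.trans ?_)
      (barrier_pos q γ _ hτ hτt x).le) himproved
    gcongr

theorem exists_undamped_lower_bound (hu : IsMildSupersolution q γ u₀ u) (hq0 : 0 ≤ q)
    (hq1 : q < 1) (hγ0 : 0 ≤ γ) (hγ2 : γ < 2) (hγN : γ < N) (hu₀ : MemLp u₀ ⊤)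
    (hu₀nonneg : 0 ≤ᵐ[volume] u₀) (hu₀ne : ¬u₀ =ᵐ[volume] 0) (hτ : 0 < τ) (hT : 0 < T) :
    ∃ m > 0, ∀ x t, τ < t → t ≤ T → m * barrier q γ τ 0 x t ≤ u x t := by
  obtain ⟨c, hc, κ, hκ, hlower⟩ :=
    hu.exists_damped_lower_bound hq1 hγ0 hu₀ hu₀nonneg hu₀ne hτ hT
  have hq' : 0 < 1 - q := sub_pos.2 hq1
  have hsqrt : √q < 1 := (sqrt_lt' one_pos).2 (by rwa [one_pow])
  have hr : -γ / (1 - q) ≤ 0 := div_nonpos_of_nonpos_of_nonneg (neg_nonpos.2 hγ0) hq'.le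
  set K := (1 - q) * envelopeMean N (-γ / (1 - q)) (κ * (√q / (1 - √q) * T))
  have hK : 0 < K := mul_pos hq' (envelopeMean_pos hr (by positivity))
  set m := min c (K ^ (1 / (1 - q)))
  have hm : 0 < m := lt_min hc (by positivity)
  have hmK : m ≤ K * m ^ q := (le_rpow_one_div_iff hq1 hK.le hm).1 (min_le_right _ _)
  refine ⟨m, hm, fun x t hτt htT => ?_⟩
  have hiterate (k : ℕ) : m * barrier q γ τ (√q ^ k * κ) x t ≤ u x t :=
    hu.iterate_lower_bound hq0 hq1 hγ0 hγ2 hγN hu₀nonneg hτ.le hT.le hκ hm.le hmK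
      (fun y s hτs hsT => (mul_le_mul_of_nonneg_right (min_le_left _ _)
        (barrier_pos q γ κ hτ.le hτs y).le).trans (hlower y s hτs hsT)) k x t hτt htT
  have hdamping : Tendsto (fun k : ℕ => √q ^ k * κ) atTop (nhds 0) := by
    simpa only [zero_mul] using
      (tendsto_pow_atTop_nhds_zero_of_lt_one (sqrt_nonneg q) hsqrt).mul_const κ
  exact le_of_tendsto' ((((continuous_barrier_damping q γ τ x t).tendsto 0).comp
    hdamping).const_mul m) hiterate

theorem sharp_lower_bound_shifted (hu : IsMildSupersolution q γ u₀ u) (hq0 : 0 ≤ q)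
    (hq1 : q < 1) (hγ0 : 0 ≤ γ) (hγ2 : γ < 2) (hγN : γ < N) (hu₀ : MemLp u₀ ⊤)
    (hu₀nonneg : 0 ≤ᵐ[volume] u₀) (hu₀ne : ¬u₀ =ᵐ[volume] 0) (hτ : 0 < τ) (hτt : τ < t)
    (x : EuclideanSpace ℝ (Fin N)) :
    ((1 - q) * envelopeMean N (-γ / (1 - q)) 0) ^ (1 / (1 - q)) * barrier q γ τ 0 x t ≤
      u x t := by
  obtain ⟨m, hm, hlower⟩ := hu.exists_undamped_lower_bound hq0 hq1 hγ0 hγ2 hγN hu₀ hu₀nonneg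
    hu₀ne hτ (hτ.trans hτt)
  have hq' : 0 < 1 - q := sub_pos.2 hq1
  have hr : -γ / (1 - q) ≤ 0 := div_nonpos_of_nonpos_of_nonneg (neg_nonpos.2 hγ0) hq'.le
  have hbarrier (p : EuclideanSpace ℝ (Fin N) × Set.Ioc τ t) : 0 < barrier q γ τ 0 p.1 p.2 :=
    barrier_pos q γ 0 hτ.le p.2.2.1 p.1
  refine (le_div_iff₀ (hbarrier (x, ⟨t, hτt, le_rfl⟩))).1 (rpow_one_div_le_of_self_improving
    (f := fun p : EuclideanSpace ℝ (Fin N) × Set.Ioc τ t => u p.1 p.2 / barrier q γ τ 0 p.1 p.2)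
    hq1 (mul_pos hq' (envelopeMean_pos hr le_rfl)).le hm (fun p => ?_) (fun c hc hcu p => ?_)
    (x, ⟨t, hτt, le_rfl⟩))
  · exact (le_div_iff₀ (hbarrier p)).2 (hlower p.1 p.2 p.2.2.1 p.2.2.2)
  · have himproved := hu.improve_lower_bound hq0 hq1 hγ0 hγ2 hγN hu₀nonneg hτ.le le_rfl hc.le
      (fun y s hτs hst => (le_div_iff₀ (hbarrier (y, ⟨s, hτs, hst⟩))).1 (hcu (y, ⟨s, hτs, hst⟩)))
      p.1 p.2.2.1 p.2.2.2
    rw [mul_zero, zero_mul] at himproved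
    exact (le_div_iff₀ (hbarrier p)).2 himproved

theorem sharp_lower_bound (hu : IsMildSupersolution q γ u₀ u) (hq0 : 0 ≤ q)
    (hq1 : q < 1) (hγ0 : 0 ≤ γ) (hγ2 : γ < 2) (hγN : γ < N) (hu₀ : MemLp u₀ ⊤)
    (hu₀nonneg : 0 ≤ᵐ[volume] u₀) (hu₀ne : ¬u₀ =ᵐ[volume] 0) (ht : 0 < t)
    (x : EuclideanSpace ℝ (Fin N)) :
    ((1 - q) * envelopeMean N (-γ / (1 - q)) 0) ^ (1 / (1 - q)) * barrier q γ 0 0 x t ≤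
      u x t := by
  have hp : 0 ≤ 1 / (1 - q) := (one_div_pos.2 (sub_pos.2 hq1)).le
  have hcont : Continuous fun τ => barrier q γ τ 0 x t := by
    unfold barrier
    fun_prop (disch := assumption)
  have hlimit : Tendsto (fun τ => barrier q γ τ 0 x t) (nhdsWithin 0 (Set.Ioi 0))
      (nhds (barrier q γ 0 0 x t)) := (hcont.tendsto 0).mono_left nhdsWithin_le_nhds
  refine le_of_tendsto (hlimit.const_mul _) ?_
  filter_upwards [Ioo_mem_nhdsGT ht] with τ hτ
  exact hu.sharp_lower_bound_shifted hq0 hq1 hγ0 hγ2 hγN hu₀ hu₀nonneg hu₀ne hτ.1 hτ.2 x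

end IsMildSupersolution

theorem exists_continuous_boundedContinuousFunction_path {X : Type*} [TopologicalSpace X]
    {u : X → ℝ → ℝ} (huc : ∀ t, 0 ≤ t → Continuous fun x => u x t)
    (huv : ∀ t, 0 ≤ t → Tendsto (fun x => u x t) (cocompact X) (nhds 0))
    (husup : ∀ t₀, 0 ≤ t₀ → ∀ ε > (0 : ℝ), ∃ δ > (0 : ℝ), ∀ t, 0 ≤ t →
      |t - t₀| < δ → ∀ x, |u x t - u x t₀| ≤ ε) :
    ∃ U : NNReal → BoundedContinuousFunction X ℝ, Continuous U ∧ ∀ t x, U t x = u x t := by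
  let V (t : NNReal) : ZeroAtInftyContinuousMap X ℝ := ⟨⟨fun x => u x t, huc t t.2⟩, huv t t.2⟩
  refine ⟨fun t => (V t).toBCF, Metric.continuous_iff.2 fun t₀ ε hε => ?_, fun t x => rfl⟩
  obtain ⟨δ, hδ, hclose⟩ := husup t₀ t₀.2 (ε / 2) (half_pos hε)
  refine ⟨δ, hδ, fun t ht => ?_⟩
  exact ((BoundedContinuousFunction.dist_le (half_pos hε).le).2 (hclose t t.2 ht)).trans_lt
    (half_lt_self hε)

theorem memLp_top_of_tendsto_cocompact {X : Type*} [TopologicalSpace X] [MeasurableSpace X]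
    [OpensMeasurableSpace X] {μ : Measure X} {f : X → ℝ} (hf : Continuous f)
    (hf0 : Tendsto f (cocompact X) (nhds 0)) : MemLp f ⊤ μ := by
  let g : ZeroAtInftyContinuousMap X ℝ := ⟨⟨f, hf⟩, hf0⟩
  exact memLp_top_of_bound hf.measurable.aestronglyMeasurable ‖g.toBCF‖
    (.of_forall g.toBCF.norm_coe_le_norm)

theorem IsMildSupersolution.of_duhamel_eq {N : ℕ} {q γ : ℝ} {u₀ : EuclideanSpace ℝ (Fin N) → ℝ}
    {u : EuclideanSpace ℝ (Fin N) → ℝ → ℝ} (hunn : ∀ x t, 0 ≤ t → 0 ≤ u x t)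
    (huc : ∀ t, 0 ≤ t → Continuous fun x => u x t)
    (huv : ∀ t, 0 ≤ t → Tendsto (fun x => u x t) (cocompact (EuclideanSpace ℝ (Fin N))) (nhds 0))
    (husup : ∀ t₀, 0 ≤ t₀ → ∀ ε > (0 : ℝ), ∃ δ > (0 : ℝ), ∀ t, 0 ≤ t →
      |t - t₀| < δ → ∀ x, |u x t - u x t₀| ≤ ε)
    (hueq : ∀ t, 0 < t → ∀ x, u x t = heatFlow N t u₀ x +
      ∫ σ in 0..t, heatFlow N (t - σ) (singularSource q γ fun y => u y σ) x) :
    IsMildSupersolution q γ u₀ u := by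
  obtain ⟨U, hU, hUu⟩ := exists_continuous_boundedContinuousFunction_path huc huv husup
  refine ⟨hunn, ?_, fun T => ?_, fun t ht x => (hueq t ht x).ge⟩
  · have hjoint : Continuous fun p : EuclideanSpace ℝ (Fin N) × NNReal => U p.2 p.1 := by fun_prop
    simpa only [hUu] using hjoint.measurable
  · obtain ⟨M, hM⟩ := (isCompact_Icc (a := 0) (b := T.toNNReal)).exists_bound_of_continuousOn
      hU.continuousOn
    refine ⟨M, fun t ht x => ?_⟩
    lift t to NNReal using ht.1
    rw [← hUu t x]
    exact ((le_norm_self _).trans ((U t).norm_coe_le_norm x)).trans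
      (hM t ⟨t.2, NNReal.le_toNNReal_of_coe_le ht.2⟩)

theorem lower_bound_solution_general {N : ℕ} {q γ : ℝ} (hq0 : 0 ≤ q) (hq1 : q < 1) (hγ0 : 0 ≤ γ)
    (hγ2 : γ < 2) (hγN : γ < N) {u₀ : EuclideanSpace ℝ (Fin N) → ℝ} (hu₀ : MemLp u₀ ⊤)
    (hu₀nonneg : 0 ≤ᵐ[volume] u₀) (hu₀ne : ¬u₀ =ᵐ[volume] 0) {η₀ : ℝ}
    (hη₀ : η₀ = (4 * π) ^ (-(N : ℝ) / 2) *
      ∫ z : EuclideanSpace ℝ (Fin N), exp (-‖z‖ ^ 2 / 4) * (1 + ‖z‖) ^ (-γ / (1 - q)))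
    {u : EuclideanSpace ℝ (Fin N) → ℝ → ℝ} (hu : IsMildSupersolution q γ u₀ u) :
    (∀ x t, 0 ≤ t → ((1 - q) * η₀) ^ (1 / (1 - q)) * t ^ (1 / (1 - q)) *
      (‖x‖ + √t) ^ (-γ / (1 - q)) ≤ u x t) ∧ (∀ x t, 0 < t → 0 < u x t) := by
  have hq' : 0 < 1 - q := sub_pos.2 hq1
  have hr : -γ / (1 - q) ≤ 0 := div_nonpos_of_nonpos_of_nonneg (neg_nonpos.2 hγ0) hq'.le
  rw [← envelopeMean_zero] at hη₀
  have hη₀pos : 0 < η₀ := hη₀ ▸ envelopeMean_pos hr le_rfl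
  have hbound (x) {t} (ht : 0 < t) : ((1 - q) * η₀) ^ (1 / (1 - q)) * t ^ (1 / (1 - q)) *
      (‖x‖ + √t) ^ (-γ / (1 - q)) ≤ u x t := by
    have hsharp := hu.sharp_lower_bound hq0 hq1 hγ0 hγ2 hγN hu₀ hu₀nonneg hu₀ne ht x
    simpa only [barrier, envelope, sub_zero, zero_mul, neg_zero, exp_zero, mul_one, ← hη₀,
      ← mul_assoc] using hsharp
  refine ⟨fun x t ht => ?_, fun x t ht => (hbound x ht).trans_lt' (by positivity)⟩
  obtain rfl | ht := ht.eq_or_lt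
  · rw [zero_rpow (by positivity), mul_zero, zero_mul]
    exact hu.nonneg x 0 le_rfl
  · exact hbound x ht

/-- Any non-negative solution of `u_t - Δu = |x|^{-γ} u^q` with non-trivial
non-negative initial data `u₀ ∈ C₀(ℝ^N)` satisfies the lower bound
`u(x,t) ≥ [(1-q)η₀]^{1/(1-q)} t^{1/(1-q)} (|x|+√t)^{-γ/(1-q)}`; in particular
it is positive for `t > 0`. -/
theorem lower_bound_solution (N : ℕ) (hN : 1 ≤ N) (q γ : ℝ)
    (hq0 : 0 < q) (hq1 : q < 1) (hγ0 : 0 < γ) (hγ : γ < min 2 (N : ℝ))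
    (u₀ : EuclideanSpace ℝ (Fin N) → ℝ)
    (hu₀c : Continuous u₀)
    (hu₀v : Tendsto u₀ (cocompact (EuclideanSpace ℝ (Fin N))) (nhds 0))
    (hu₀nn : ∀ x, 0 ≤ u₀ x) (hu₀ne : u₀ ≠ 0)
    (η₀ : ℝ)
    (hη₀ : η₀ = (4 * π) ^ (-(N : ℝ) / 2) *
      ∫ z : EuclideanSpace ℝ (Fin N),
        Real.exp (-‖z‖ ^ 2 / 4) * (1 + ‖z‖) ^ (-γ / (1 - q)))
    (u : EuclideanSpace ℝ (Fin N) → ℝ → ℝ)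
    -- u is non-negative
    (hunn : ∀ x t, 0 ≤ t → 0 ≤ u x t)
    -- for every t ≥ 0, x ↦ u(x,t) is continuous and vanishes at infinity
    (huc : ∀ t, 0 ≤ t → Continuous (fun x => u x t))
    (huv : ∀ t, 0 ≤ t → Tendsto (fun x => u x t)
      (cocompact (EuclideanSpace ℝ (Fin N))) (nhds 0))
    -- t ↦ u(·,t) is continuous from [0,∞) into (C₀, sup norm)
    (husup : ∀ t₀, 0 ≤ t₀ → ∀ ε > (0 : ℝ), ∃ δ > (0 : ℝ), ∀ t, 0 ≤ t →
      |t - t₀| < δ → ∀ x, |u x t - u x t₀| ≤ ε)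
    -- initial condition (the integral equation at t = 0)
    (huinit : ∀ x, u x 0 = u₀ x)
    -- the integral equation for t > 0
    (hueq : ∀ t, 0 < t → ∀ x,
      u x t = (∫ y, heatKernel N t (x - y) * u₀ y) +
        ∫ σ in (0 : ℝ)..t, ∫ y,
          heatKernel N (t - σ) (x - y) * ‖y‖ ^ (-γ) * u y σ ^ q) :
    (∀ x t, 0 ≤ t →
      ((1 - q) * η₀) ^ (1 / (1 - q)) * t ^ (1 / (1 - q)) *
        (‖x‖ + Real.sqrt t) ^ (-γ / (1 - q)) ≤ u x t) ∧
    (∀ x t, 0 < t → 0 < u x t) := by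
  have hu₀ne' : ¬u₀ =ᵐ[volume] 0 := fun h =>
    hu₀ne ((hu₀c.ae_eq_iff_eq volume continuous_const).1 h)
  have hu : IsMildSupersolution q γ u₀ u := .of_duhamel_eq hunn huc huv husup <| by
    simpa only [heatFlow, singularSource, ← mul_assoc] using hueq
  exact lower_bound_solution_general hq0.le hq1 hγ0.le (hγ.trans_le (min_le_left _ _))
    (hγ.trans_le (min_le_right _ _)) (memLp_top_of_tendsto_cocompact hu₀c hu₀v)
    (.of_forall hu₀nn) hu₀ne' hη₀ hu
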